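/- For every pair of integers m ≥ n ≥ 9, there exist n positive rational numbers whose product is 1 and whose sum is m. -/

import Mathlib

/-! ## Ternary positive definite integral forms of determinant one -/

/-- The symmetric matrix `[[a,f,e],[f,b,d],[e,d,c]]` is the Gram matrix of three vectors of `ℤ³`. -/
def GramZ (a b c d e f : ℤ) : Prop :=
  ∃ x1 x2 x3 y1 y2 y3 z1 z2 z3 : ℤ,
    x1 * x1 + x2 * x2 + x3 * x3 = a ∧ y1 * y1 + y2 * y2 + y3 * y3 = b ∧
    z1 * z1 + z2 * z2 + z3 * z3 = c ∧ y1 * z1 + y2 * z2 + y3 * z3 = d ∧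
    x1 * z1 + x2 * z2 + x3 * z3 = e ∧ x1 * y1 + x2 * y2 + x3 * y3 = f

lemma GramZ.swap_xy {a b c d e f : ℤ} (h : GramZ b a c e d f) : GramZ a b c d e f := by
  obtain ⟨x1, x2, x3, y1, y2, y3, z1, z2, z3, h1, h2, h3, h4, h5, h6⟩ := h
  exact ⟨y1, y2, y3, x1, x2, x3, z1, z2, z3, h2, h1, h3, h5, h4, by linarith⟩

lemma GramZ.swap_yz {a b c d e f : ℤ} (h : GramZ a c b d f e) : GramZ a b c d e f := by
  obtain ⟨x1, x2, x3, y1, y2, y3, z1, z2, z3, h1, h2, h3, h4, h5, h6⟩ := h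
  exact ⟨x1, x2, x3, z1, z2, z3, y1, y2, y3, h1, h3, h2, by linarith, h6, h5⟩

/-- replace `y` by `y + k x` -/
lemma GramZ.shift_yx {a b c d e f : ℤ} (k : ℤ)
    (h : GramZ a (b + 2 * k * f + k ^ 2 * a) c (d + k * e) e (f + k * a)) :
    GramZ a b c d e f := by
  obtain ⟨x1, x2, x3, y1, y2, y3, z1, z2, z3, h1, h2, h3, h4, h5, h6⟩ := h
  refine ⟨x1, x2, x3, y1 - k * x1, y2 - k * x2, y3 - k * x3, z1, z2, z3, h1, ?_, h3, ?_, h5, ?_⟩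
  · linear_combination h2 - 2 * k * h6 + k ^ 2 * h1
  · linear_combination h4 - k * h5
  · linear_combination h6 - k * h1

/-- replace `z` by `z + k x` -/
lemma GramZ.shift_zx {a b c d e f : ℤ} (k : ℤ)
    (h : GramZ a b (c + 2 * k * e + k ^ 2 * a) (d + k * f) (e + k * a) f) :
    GramZ a b c d e f :=
  GramZ.swap_yz (GramZ.shift_yx k (GramZ.swap_yz h))

/-- replace `z` by `z + k y` -/
lemma GramZ.shift_zy {a b c d e f : ℤ} (k : ℤ)
    (h : GramZ a b (c + 2 * k * d + k ^ 2 * b) (d + k * b) (e + k * f) f) :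
    GramZ a b c d e f := by
  refine GramZ.swap_xy (GramZ.shift_zx k (GramZ.swap_xy ?_))
  exact h

/-- rounding -/
lemma exists_round (g f : ℤ) (hg : 0 < g) : ∃ k : ℤ, -g ≤ 2 * (f + k * g) ∧ 2 * (f + k * g) ≤ g := by
  refine ⟨-((2 * f + g) / (2 * g)), ?_, ?_⟩
  · have := Int.emod_nonneg (2 * f + g) (b := 2 * g) (by omega)
    have h2 := Int.mul_ediv_add_emod (2 * f + g) (2 * g)
    nlinarith
  · have := Int.emod_lt_of_pos (2 * f + g) (b := 2 * g) (by omega)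
    have h2 := Int.mul_ediv_add_emod (2 * f + g) (2 * g)
    nlinarith

lemma gramZ_of_bounds (N : ℕ) : ∀ (M : ℕ) (a b c d e f : ℤ), a ≤ N → a * b - f ^ 2 ≤ M →
    0 < a → 0 < a * b - f ^ 2 →
    a * b * c + 2 * d * e * f - a * d ^ 2 - b * e ^ 2 - c * f ^ 2 = 1 → GramZ a b c d e f := by
  induction N with
  | zero => intro M a b c d e f h1 _ h2; exact absurd h1 (by push_cast; omega)
  | succ N ihN =>
    intro M
    induction M with
    | zero => intro a b c d e f _ h1 _ h2; exact absurd h1 (by push_cast; omega)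
    | succ M ihM =>
      intro a b c d e f haN hgM ha hg hdet
      -- reduce f
      obtain ⟨k, hk1, hk2⟩ := exists_round a f ha
      apply GramZ.shift_yx k
      have hg' : a * (b + 2 * k * f + k ^ 2 * a) - (f + k * a) ^ 2 = a * b - f ^ 2 := by ring
      rw [← hg'] at hg hgM
      have hdet' : a * (b + 2 * k * f + k ^ 2 * a) * c + 2 * (d + k * e) * e * (f + k * a)
          - a * (d + k * e) ^ 2 - (b + 2 * k * f + k ^ 2 * a) * e ^ 2 - c * (f + k * a) ^ 2 = 1 := by
        rw [← hdet]; ring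
      clear hg' hdet
      generalize b + 2 * k * f + k ^ 2 * a = b at *
      generalize f + k * a = f at *
      generalize d + k * e = d at *
      have hb : 0 < b := by
        by_contra hb
        nlinarith [sq_nonneg f]
      by_cases hba : b < a
      · -- swap x and y
        apply GramZ.swap_xy
        refine ihN (b * a - f ^ 2).toNat b a c e d f (by push_cast at haN; omega)
          (Int.self_le_toNat _) hb (by linarith) (by linarith)
      push Not at hba
      -- reduce the projected binary form
      obtain ⟨l, hl1, hl2⟩ := exists_round (a * b - f ^ 2) (a * d - e * f) hg
      apply GramZ.shift_zy l
      have hdet : a * b * (c + 2 * l * d + l ^ 2 * b) + 2 * (d + l * b) * (e + l * f) * f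
          - a * (d + l * b) ^ 2 - b * (e + l * f) ^ 2 - (c + 2 * l * d + l ^ 2 * b) * f ^ 2 = 1 := by
        rw [← hdet']; ring
      have hl : a * d - e * f + l * (a * b - f ^ 2) = a * (d + l * b) - (e + l * f) * f := by ring
      rw [hl] at hl1 hl2
      clear hl hdet'
      generalize c + 2 * l * d + l ^ 2 * b = c at *
      generalize d + l * b = d at *
      generalize e + l * f = e at *
      have key : (a * b - f ^ 2) * (a * c - e ^ 2) - (a * d - e * f) ^ 2 = a := by
        linear_combination a * hdet
      have hg22 : 0 < a * c - e ^ 2 := by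
        by_contra h
        nlinarith [sq_nonneg (a * d - e * f)]
      by_cases hsw : a * c - e ^ 2 < a * b - f ^ 2
      · apply GramZ.swap_yz
        exact ihM a c b d f e haN (by push_cast at hgM; omega) ha hg22 (by linarith)
      push Not at hsw
      have hgg : 3 * (a * b - f ^ 2) ^ 2 ≤ 4 * a := by
        nlinarith [mul_le_mul_of_nonneg_left hsw hg.le]
      have hlow : 3 * a ^ 2 ≤ 4 * (a * b - f ^ 2) := by
        nlinarith [mul_le_mul_of_nonneg_left hba ha.le]
      have ha1 : a = 1 := by
        by_contra hne
        have ha2 : 2 ≤ a := by omega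
        have h4 : (3 * a ^ 2) ^ 2 ≤ (4 * (a * b - f ^ 2)) ^ 2 :=
          pow_le_pow_left₀ (by positivity) hlow 2
        have h5 : 27 * a ^ 4 ≤ 64 * a := by nlinarith
        have h6 : 8 ≤ a ^ 3 := by
          calc (8 : ℤ) = 2 ^ 3 := by norm_num
            _ ≤ a ^ 3 := pow_le_pow_left₀ (by norm_num) ha2 3
        nlinarith
      subst ha1
      have hf : f = 0 := by omega
      subst hf
      have hb1 : b = 1 := by nlinarith
      subst hb1
      have hd : d = 0 := by omega
      subst hd
      apply GramZ.shift_zx (-e)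
      refine ⟨1, 0, 0, 0, 1, 0, 0, 0, 1, ?_, ?_, ?_, ?_, ?_, ?_⟩ <;> first | linarith | nlinarith

lemma gramZ_of_det_one {a b c d e f : ℤ} (ha : 0 < a) (hg : 0 < a * b - f ^ 2)
    (hdet : a * b * c + 2 * d * e * f - a * d ^ 2 - b * e ^ 2 - c * f ^ 2 = 1) :
    GramZ a b c d e f :=
  gramZ_of_bounds a.toNat (a * b - f ^ 2).toNat a b c d e f (Int.self_le_toNat _)
    (Int.self_le_toNat _) ha hg hdet

/-- Legendre's three-square theorem for `n ≡ 2 (mod 4)`. -/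
lemma three_squares (n : ℕ) (hn : n % 4 = 2) :
    ∃ x y z : ℤ, x * x + y * y + z * z = n := by
  have hcop : (n - 1).Coprime (4 * n) := by
    apply Nat.Coprime.mul_right
    · have h2 : (n - 1).Coprime 2 := by
        apply Nat.Coprime.symm; rw [Nat.coprime_two_left, Nat.odd_iff]; omega
      exact Nat.Coprime.mul_right h2 h2
    · have h := Nat.coprime_self_add_right (m := n - 1) (n := 1)
      rw [show n - 1 + 1 = n by omega] at h
      exact h.2 (Nat.coprime_one_right _)
  obtain ⟨p, hpn, hp, hmod⟩ := Nat.forall_exists_prime_gt_and_modEq n (by omega) hcop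
  obtain ⟨v, hv⟩ : ∃ v, p = (n - 1) + 4 * n * v := by
    have := (Nat.modEq_iff_dvd' (by omega)).1 hmod.symm
    obtain ⟨v, hv⟩ := this
    exact ⟨v, by omega⟩
  have : Fact p.Prime := ⟨hp⟩
  have hp4 : p % 4 = 1 := by
    rw [hv, mul_assoc]; omega
  have hpodd : Odd p := by rw [Nat.odd_iff]; omega
  have hpz : (p : ℤ) = (4 * v + 1 : ℕ) * (n : ℤ) - 1 := by
    rw [hv]; push_cast [Nat.cast_sub (show 1 ≤ n by omega)]; ring
  have hdodd : Odd (4 * v + 1) := by rw [Nat.odd_iff]; omega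
  have hJ : jacobiSym (-((4 * v + 1 : ℕ) : ℤ)) p = 1 := by
    rw [jacobiSym.neg _ hpodd, ZMod.χ₄_nat_one_mod_four hp4, one_mul,
      jacobiSym.quadratic_reciprocity_one_mod_four (by omega) hpodd,
      jacobiSym.mod_left' (a₂ := -1), jacobiSym.at_neg_one hdodd,
      ZMod.χ₄_nat_one_mod_four (by omega)]
    rw [hpz]
    apply Int.emod_eq_emod_iff_emod_sub_eq_zero.2
    apply Int.emod_eq_zero_of_dvd
    exact ⟨n, by ring⟩
  obtain ⟨r, hr⟩ := ZMod.isSquare_of_jacobiSym_eq_one hJ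
  obtain ⟨s, rfl⟩ := ZMod.intCast_surjective r
  have hdvd : (p : ℤ) ∣ s * s + (4 * v + 1 : ℕ) := by
    rw [← ZMod.intCast_zmod_eq_zero_iff_dvd]
    push_cast at hr ⊢
    rw [← hr]; ring
  obtain ⟨b, hb⟩ := hdvd
  have hp0 : (0 : ℤ) < p := by exact_mod_cast hp.pos
  obtain ⟨x1, x2, x3, y1, y2, y3, z1, z2, z3, h1, h2, h3, h4, h5, h6⟩ :=
    gramZ_of_det_one (a := p) (b := b) (c := n) (d := 1) (e := 0) (f := s) hp0
      (by rw [← hb]; push_cast; nlinarith)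
      (by rw [← hb]; linear_combination -hpz)
  exact ⟨z1, z2, z3, h3⟩

/-! ## Sums of nine rationals -/

def Good (n m : ℕ) : Prop :=
  ∃ a : Fin n → ℚ, (∀ i, 0 < a i) ∧ (∏ i, a i) = 1 ∧ (∑ i, a i) = m

lemma Good.succ {n m : ℕ} (h : Good n m) : Good (n + 1) (m + 1) := by
  obtain ⟨a, h1, h2, h3⟩ := h
  refine ⟨Fin.cons 1 a, ?_, ?_, ?_⟩
  · intro i
    refine Fin.cases ?_ ?_ i
    · simp
    · intro j; simpa using h1 j
  · rw [Fin.prod_univ_succ]; simpa using h2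
  · rw [Fin.sum_univ_succ]; simp [h3, add_comm]

/-- three positive rationals with sum `s` and product `p` -/
def Trip (s p : ℚ) : Prop := ∃ x y z : ℚ, 0 < x ∧ 0 < y ∧ 0 < z ∧ x + y + z = s ∧ x * y * z = p

/-- The parametric solution `(2, a²-a+1, a²+a+1)` of `x³+y³+z³ = (a²+5)xyz`, scaled by `u`. -/
lemma trip_sq (u a : ℚ) (hu : 0 < u) : Trip (u * (a ^ 2 + 5)) (u ^ 3) := by
  have hy : 0 < a ^ 2 - a + 1 := by nlinarith [sq_nonneg (a - 1 / 2)]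
  have hz : 0 < a ^ 2 + a + 1 := by nlinarith [sq_nonneg (a + 1 / 2)]
  refine ⟨u * (4 / ((a ^ 2 - a + 1) * (a ^ 2 + a + 1))),
    u * ((a ^ 2 - a + 1) ^ 2 / (2 * (a ^ 2 + a + 1))),
    u * ((a ^ 2 + a + 1) ^ 2 / (2 * (a ^ 2 - a + 1))),
    by positivity, by positivity, by positivity, ?_, ?_⟩
  · have hy' := hy.ne'
    have hz' := hz.ne'
    have hsum : (a ^ 2 - a + 1) ^ 3 + (a ^ 2 + a + 1) ^ 3 + 8 =
        2 * (a ^ 2 + 5) * ((a ^ 2 - a + 1) * (a ^ 2 + a + 1)) := by ring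
    generalize a ^ 2 - a + 1 = y at *
    generalize a ^ 2 + a + 1 = z at *
    field_simp
    linear_combination hsum
  · have hy' := hy.ne'
    have hz' := hz.ne'
    generalize a ^ 2 - a + 1 = y at *
    generalize a ^ 2 + a + 1 = z at *
    field_simp
    norm_num

lemma trip_one : Trip 3 1 := ⟨1, 1, 1, by norm_num⟩

lemma good_of_trip {s1 s2 s3 p1 p2 p3 : ℚ} (h1 : Trip s1 p1) (h2 : Trip s2 p2) (h3 : Trip s3 p3)
    (m : ℕ) (hp : p1 * p2 * p3 = 1) (hs : s1 + s2 + s3 = m) : Good 9 m := by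
  obtain ⟨x1, y1, z1, hx1, hy1, hz1, a1, b1⟩ := h1
  obtain ⟨x2, y2, z2, hx2, hy2, hz2, a2, b2⟩ := h2
  obtain ⟨x3, y3, z3, hx3, hy3, hz3, a3, b3⟩ := h3
  refine ⟨![x1, y1, z1, x2, y2, z2, x3, y3, z3], ?_, ?_, ?_⟩
  · intro i
    fin_cases i <;> simpa
  · rw [← hp, ← b1, ← b2, ← b3]
    simp [Fin.prod_univ_succ]
    ring
  · rw [← hs, ← a1, ← a2, ← a3]
    simp [Fin.sum_univ_succ]
    ring

lemma good_of_fifteen {m : ℕ} (a b c : ℚ) (h : a ^ 2 + b ^ 2 + c ^ 2 + 15 = m) : Good 9 m :=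
  good_of_trip (trip_sq 1 a one_pos) (trip_sq 1 b one_pos) (trip_sq 1 c one_pos) m
    (by norm_num) (by rw [← h]; ring)

lemma good_of_twentyfive {m : ℕ} (a b c : ℚ) (h : a ^ 2 + b ^ 2 + c ^ 2 + 25 = m) : Good 9 m :=
  good_of_trip (trip_sq 4 (a / 2) (by norm_num)) (trip_sq (1 / 2) (b + c) (by norm_num))
    (trip_sq (1 / 2) (b - c) (by norm_num)) m
    (by norm_num) (by rw [← h]; ring)

lemma good_of_large {m : ℕ} (hm : 83 ≤ m) : Good 9 m := by
  obtain ⟨x, y, z, h⟩ := three_squares (4 * m - 330) (by omega)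
  have h' : (x : ℚ) * x + y * y + z * z = 4 * m - 330 := by
    have h2 : x * x + y * y + z * z = 4 * (m : ℤ) - 330 := by rw [h]; omega
    exact_mod_cast h2
  exact good_of_trip (trip_sq 16 (x / 8) (by norm_num)) (trip_sq (1 / 4) y (by norm_num))
    (trip_sq (1 / 4) z (by norm_num)) m (by norm_num) (by linear_combination h' / 4)

lemma good_22 : Good 9 22 :=
  good_of_trip trip_one (trip_sq 1 0 one_pos) (trip_sq 1 3 one_pos) 22 (by norm_num) (by norm_num)

lemma good_tiny {m : ℕ} (h1 : 9 ≤ m) (h2 : m < 15) : Good 9 m := by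
  interval_cases m
  · exact good_of_trip trip_one trip_one trip_one 9 (by norm_num) (by norm_num)
  · exact good_of_trip (s1 := 9 / 2) (p1 := 2) (s2 := 5 / 2) (p2 := 1 / 2)
      ⟨2, 2, 1 / 2, by norm_num⟩ ⟨1 / 2, 1, 1, by norm_num⟩ trip_one 10 (by norm_num) (by norm_num)
  · exact good_of_trip trip_one trip_one (trip_sq 1 0 one_pos) 11 (by norm_num) (by norm_num)
  · exact good_of_trip trip_one trip_one (trip_sq 1 1 one_pos) 12 (by norm_num) (by norm_num)
  · exact good_of_trip trip_one (trip_sq 1 0 one_pos) (trip_sq 1 0 one_pos) 13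
      (by norm_num) (by norm_num)
  · exact good_of_trip trip_one (trip_sq 1 0 one_pos) (trip_sq 1 1 one_pos) 14
      (by norm_num) (by norm_num)

lemma good_small {m : ℕ} (h1 : 15 ≤ m) (h2 : m < 83) : Good 9 m := by
  interval_cases m
  · exact good_of_fifteen 0 0 0 (by norm_num)
  · exact good_of_fifteen 1 0 0 (by norm_num)
  · exact good_of_fifteen 1 1 0 (by norm_num)
  · exact good_of_fifteen 1 1 1 (by norm_num)
  · exact good_of_fifteen 2 0 0 (by norm_num)
  · exact good_of_fifteen 2 1 0 (by norm_num)
  · exact good_of_fifteen 2 1 1 (by norm_num)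
  · exact good_22
  · exact good_of_fifteen 2 2 0 (by norm_num)
  · exact good_of_fifteen 2 2 1 (by norm_num)
  · exact good_of_fifteen 3 1 0 (by norm_num)
  · exact good_of_fifteen 3 1 1 (by norm_num)
  · exact good_of_fifteen 2 2 2 (by norm_num)
  · exact good_of_fifteen 3 2 0 (by norm_num)
  · exact good_of_fifteen 3 2 1 (by norm_num)
  · exact good_of_twentyfive 2 1 0 (by norm_num)
  · exact good_of_fifteen 4 0 0 (by norm_num)
  · exact good_of_fifteen 3 2 2 (by norm_num)
  · exact good_of_fifteen 3 3 0 (by norm_num)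
  · exact good_of_fifteen 3 3 1 (by norm_num)
  · exact good_of_fifteen 4 2 0 (by norm_num)
  · exact good_of_fifteen 4 2 1 (by norm_num)
  · exact good_of_fifteen 3 3 2 (by norm_num)
  · exact good_of_twentyfive 3 2 0 (by norm_num)
  · exact good_of_fifteen 4 2 2 (by norm_num)
  · exact good_of_fifteen 4 3 0 (by norm_num)
  · exact good_of_fifteen 4 3 1 (by norm_num)
  · exact good_of_fifteen 3 3 3 (by norm_num)
  · exact good_of_twentyfive 3 3 0 (by norm_num)
  · exact good_of_fifteen 4 3 2 (by norm_num)
  · exact good_of_fifteen 5 2 1 (by norm_num)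
  · exact good_of_twentyfive 4 2 1 (by norm_num)
  · exact good_of_fifteen 4 4 0 (by norm_num)
  · exact good_of_fifteen 4 4 1 (by norm_num)
  · exact good_of_fifteen 4 3 3 (by norm_num)
  · exact good_of_fifteen 5 3 1 (by norm_num)
  · exact good_of_fifteen 4 4 2 (by norm_num)
  · exact good_of_fifteen 6 1 0 (by norm_num)
  · exact good_of_fifteen 5 3 2 (by norm_num)
  · exact good_of_twentyfive 4 3 2 (by norm_num)
  · exact good_of_fifteen 6 2 0 (by norm_num)
  · exact good_of_fifteen 4 4 3 (by norm_num)
  · exact good_of_fifteen 5 4 1 (by norm_num)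
  · exact good_of_fifteen 5 3 3 (by norm_num)
  · exact good_of_fifteen 6 2 2 (by norm_num)
  · exact good_of_fifteen 5 4 2 (by norm_num)
  · exact good_of_fifteen 6 3 1 (by norm_num)
  · exact good_of_twentyfive 6 1 0 (by norm_num)
  · exact good_of_fifteen 4 4 4 (by norm_num)
  · exact good_of_fifteen 6 3 2 (by norm_num)
  · exact good_of_fifteen 5 4 3 (by norm_num)
  · exact good_of_fifteen 5 5 1 (by norm_num)
  · exact good_of_fifteen 6 4 0 (by norm_num)
  · exact good_of_fifteen 6 4 1 (by norm_num)
  · exact good_of_fifteen 5 5 2 (by norm_num)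
  · exact good_of_twentyfive 5 4 2 (by norm_num)
  · exact good_of_fifteen 6 4 2 (by norm_num)
  · exact good_of_fifteen 5 4 4 (by norm_num)
  · exact good_of_fifteen 7 3 0 (by norm_num)
  · exact good_of_fifteen 5 5 3 (by norm_num)
  · exact good_of_twentyfive 5 4 3 (by norm_num)
  · exact good_of_fifteen 6 4 3 (by norm_num)
  · exact good_of_fifteen 6 5 1 (by norm_num)
  · exact good_of_twentyfive 6 4 1 (by norm_num)
  · exact good_of_fifteen 8 0 0 (by norm_num)
  · exact good_of_fifteen 6 5 2 (by norm_num)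
  · exact good_of_fifteen 5 5 4 (by norm_num)
  · exact good_of_fifteen 7 3 3 (by norm_num)

lemma good_nine {m : ℕ} (h : 9 ≤ m) : Good 9 m := by
  rcases lt_or_ge m 15 with h1 | h1
  · exact good_tiny h h1
  rcases lt_or_ge m 83 with h2 | h2
  · exact good_small h1 h2
  · exact good_of_large h2

lemma good_all (k m : ℕ) (h : 9 ≤ m) : Good (9 + k) (m + k) := by
  induction k with
  | zero => exact good_nine h
  | succ k ih => exact ih.succ

theorem stmt_19 (m n : ℕ) (hn : 9 ≤ n) (hnm : n ≤ m) :
    ∃ a : Fin n → ℚ, (∀ i, 0 < a i) ∧ (∏ i, a i) = 1 ∧ (∑ i, a i) = m := by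
  obtain ⟨k, rfl⟩ := Nat.exists_eq_add_of_le hn
  obtain ⟨j, rfl⟩ := Nat.exists_eq_add_of_le hnm
  have h := good_all k (9 + j) (by omega)
  rw [show 9 + j + k = 9 + k + j by omega] at h
  exact h
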